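/- For every integer k ≥ 2, every k-degenerate finite simple graph G on n vertices satisfies α_1(G) ≥ 2n/(k+2); hence 2/(k+2) ≤ α_1(k) ≤ 2/(k+1). -/

import Mathlib

/-- The subgraph of `G` induced on `A` is `d`-degenerate: every nonempty (finite)
subset of `A` contains a vertex with at most `d` neighbours inside that subset. -/
def DegenOn {V : Type*} (G : SimpleGraph V) (d : ℕ) (A : Set V) : Prop :=
  ∀ S : Set V, S ⊆ A → S.Finite → S.Nonempty → ∃ v ∈ S, (S ∩ G.neighborSet v).ncard ≤ d

/-- `G` is `d`-degenerate. -/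
def Degen {V : Type*} (G : SimpleGraph V) (d : ℕ) : Prop :=
  DegenOn G d Set.univ

/-- `α_d(G)`: the maximum number of vertices of an induced `d`-degenerate subgraph of `G`. -/
noncomputable def alphaDeg {V : Type*} [Fintype V] (G : SimpleGraph V) (d : ℕ) : ℕ :=
  sSup {m : ℕ | ∃ A : Set V, DegenOn G d A ∧ A.ncard = m}

/-- `α_d(k)`: the infimum, over all finite simple graphs `G` of degeneracy exactly `k`,
of the ratio `α_d(G) / |V(G)|`. -/
noncomputable def alphaRatio (d k : ℕ) : ℝ :=
  sInf {r : ℝ | ∃ (n : ℕ) (G : SimpleGraph (Fin n)),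
    Degen G k ∧ ¬ Degen G (k - 1) ∧ r = (alphaDeg G d : ℝ) / (n : ℝ)}

/-!
A `k`-degenerate graph can be built up by adding vertices one at a time, each joined to at most `k`
earlier ones. If `k < ∑ i, (e i + 1)`, then every new vertex has at most `e i` earlier neighbours
of some colour `i`, and giving it that colour keeps the `i`-th class `e i`-degenerate. With
`⌊k / (d + 1)⌋ + 1` classes that are all `d`-degenerate, the largest one has at least
`(d + 1) n / (k + d + 1)` vertices. The upper bound comes from the complete graph on `k + 1`
vertices, where the `d`-degenerate sets are those with at most `d + 1` elements.
-/

theorem ncard_eq_sum_ncard_inter_preimage {α ι : Type*} [Fintype ι] {s : Set α} (hs : s.Finite)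
    (f : α → ι) : s.ncard = ∑ i, (s ∩ f ⁻¹' {i}).ncard := by
  classical
  lift s to Finset α using hs
  rw [Set.ncard_coe_finset,
    Finset.card_eq_sum_card_fiberwise fun a _ ↦ Finset.mem_coe.2 (Finset.mem_univ (f a))]
  refine Finset.sum_congr rfl fun i _ ↦ ?_
  rw [← Set.ncard_coe_finset, Finset.coe_filter]
  rfl

section Degeneracy

variable {V : Type*} {G : SimpleGraph V} {d k : ℕ} {A B : Set V} {v : V}

theorem DegenOn.mono (hB : DegenOn G d B) (hAB : A ⊆ B) : DegenOn G d A :=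
  fun S hSA ↦ hB S (hSA.trans hAB)

theorem degenOn_empty : DegenOn G d ∅ :=
  fun _ hS _ hne ↦ absurd (Set.subset_empty_iff.1 hS) hne.ne_empty

theorem DegenOn.insert_of_ncard_le (hA : DegenOn G d A) (hfin : (A ∩ G.neighborSet v).Finite)
    (hv : (A ∩ G.neighborSet v).ncard ≤ d) : DegenOn G d (insert v A) := by
  intro S hS hSfin hne
  by_cases hvS : v ∈ S
  · have hsub : S ∩ G.neighborSet v ⊆ A ∩ G.neighborSet v := fun w ⟨hwS, hvw⟩ ↦
      ⟨Set.mem_of_mem_insert_of_ne (hS hwS) (G.ne_of_adj hvw).symm, hvw⟩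
    exact ⟨v, hvS, (Set.ncard_le_ncard hsub hfin).trans hv⟩
  · exact hA S ((Set.subset_insert_iff_of_notMem hvS).1 hS) hSfin hne

@[elab_as_elim]
theorem DegenOn.induction_on_insert {motive : Set V → Prop} (hA : DegenOn G k A)
    (hfin : A.Finite) (empty : motive ∅)
    (insert : ∀ v S, S.Finite → (S ∩ G.neighborSet v).ncard ≤ k → motive S →
      motive (insert v S)) : motive A := by
  induction hn : A.ncard generalizing A with
  | zero => rwa [(Set.ncard_eq_zero hfin).1 hn]
  | succ n ih =>
    have hne : A.Nonempty := Set.nonempty_of_ncard_ne_zero (by omega)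
    obtain ⟨v, hvA, hv⟩ := hA A subset_rfl hfin hne
    have hsub : A \ {v} ⊆ A := Set.sdiff_subset
    have hrest : motive (A \ {v}) := ih (hA.mono hsub) (hfin.subset hsub)
      (by rw [Set.ncard_sdiff_singleton_of_mem hvA, hn, Nat.add_sub_cancel])
    have hdeg : ((A \ {v}) ∩ G.neighborSet v).ncard ≤ k :=
      (Set.ncard_le_ncard (Set.inter_subset_inter_left _ hsub) (hfin.inter_of_left _)).trans hv
    simpa only [Set.insert_sdiff_self_of_mem hvA] using
      insert v (A \ {v}) (hfin.subset hsub) hdeg hrest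

theorem DegenOn.exists_coloring_of_lt_sum {ι : Type*} [Fintype ι] {e : ι → ℕ}
    (hA : DegenOn G k A) (hfin : A.Finite) (hk : k < ∑ i, (e i + 1)) :
    ∃ c : V → ι, ∀ i, DegenOn G (e i) (A ∩ c ⁻¹' {i}) := by
  classical
  refine hA.induction_on_insert hfin ?_ ?_
  · obtain ⟨i, -, -⟩ := Finset.exists_ne_zero_of_sum_ne_zero (Nat.ne_zero_of_lt hk)
    exact ⟨fun _ ↦ i, fun j ↦ degenOn_empty.mono Set.inter_subset_left⟩
  · rintro v S hS hv ⟨c, hc⟩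
    obtain ⟨i, -, hi⟩ : ∃ i ∈ Finset.univ, (S ∩ G.neighborSet v ∩ c ⁻¹' {i}).ncard < e i + 1 :=
      Finset.exists_lt_of_sum_lt <| by
        rw [← ncard_eq_sum_ncard_inter_preimage (hS.inter_of_left _)]
        exact hv.trans_lt hk
    rw [Set.inter_right_comm] at hi
    refine ⟨Function.update c v i, fun j ↦ ?_⟩
    rcases eq_or_ne j i with rfl | hji
    · have hsub : insert v S ∩ Function.update c v j ⁻¹' {j} ⊆ insert v (S ∩ c ⁻¹' {j}) := by
        grind [Function.update_apply]
      have hclass : (S ∩ c ⁻¹' {j} ∩ G.neighborSet v).Finite :=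
        (hS.inter_of_left _).inter_of_left _
      exact ((hc j).insert_of_ncard_le hclass (Nat.le_of_lt_succ hi)).mono hsub
    · have hsub : insert v S ∩ Function.update c v i ⁻¹' {j} ⊆ S ∩ c ⁻¹' {j} := by
        grind [Function.update_apply]
      exact (hc j).mono hsub

end Degeneracy

theorem degen_of_isEmpty {V : Type*} [IsEmpty V] (G : SimpleGraph V) (d : ℕ) : Degen G d :=
  degenOn_empty.mono fun v _ ↦ isEmptyElim v

section CompleteGraph

variable {V : Type*}

theorem degenOn_top_iff {d : ℕ} {A : Set V} (hA : A.Finite) :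
    DegenOn (⊤ : SimpleGraph V) d A ↔ A.ncard ≤ d + 1 := by
  have hdeg : ∀ (S : Set V) (v : V),
      S ∩ (⊤ : SimpleGraph V).neighborSet v = S \ {v} := fun S v ↦ by
    rw [SimpleGraph.neighborSet_top, Set.sdiff_eq]
  simp only [DegenOn, hdeg]
  constructor
  · intro h
    rcases A.eq_empty_or_nonempty with rfl | hne
    · simp only [Set.ncard_empty, Nat.zero_le]
    · obtain ⟨v, hv, hle⟩ := h A subset_rfl hA hne
      rw [Set.ncard_sdiff_singleton_of_mem hv] at hle
      omega
  · rintro hcard S hSA - ⟨v, hv⟩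
    have hle : S.ncard ≤ A.ncard := Set.ncard_le_ncard hSA hA
    refine ⟨v, hv, ?_⟩
    rw [Set.ncard_sdiff_singleton_of_mem hv]
    omega

theorem degen_top_iff [Fintype V] {d : ℕ} :
    Degen (⊤ : SimpleGraph V) d ↔ Fintype.card V ≤ d + 1 := by
  rw [Degen, degenOn_top_iff Set.finite_univ, Set.ncard_univ, Nat.card_eq_fintype_card]

end CompleteGraph

section AlphaDeg

variable {V : Type*} [Fintype V] {G : SimpleGraph V} {d k : ℕ}

theorem DegenOn.ncard_le_alphaDeg {A : Set V} (hA : DegenOn G d A) : A.ncard ≤ alphaDeg G d := by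
  refine le_csSup ⟨Nat.card V, ?_⟩ ⟨A, hA, rfl⟩
  rintro _ ⟨B, -, rfl⟩
  exact Set.ncard_le_card B

theorem alphaDeg_top_le (V : Type*) [Fintype V] (d : ℕ) :
    alphaDeg (⊤ : SimpleGraph V) d ≤ d + 1 := by
  refine csSup_le' ?_
  rintro _ ⟨A, hA, rfl⟩
  exact (degenOn_top_iff A.toFinite).1 hA

theorem Degen.card_le_sum_alphaDeg {ι : Type*} [Fintype ι] {e : ι → ℕ} (hG : Degen G k)
    (hk : k < ∑ i, (e i + 1)) : Fintype.card V ≤ ∑ i, alphaDeg G (e i) := by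
  obtain ⟨c, hc⟩ := DegenOn.exists_coloring_of_lt_sum hG Set.finite_univ hk
  rw [← Nat.card_eq_fintype_card, ← Set.ncard_univ,
    ncard_eq_sum_ncard_inter_preimage Set.finite_univ c]
  exact Finset.sum_le_sum fun i _ ↦ (hc i).ncard_le_alphaDeg

theorem Degen.mul_card_le_mul_alphaDeg (hG : Degen G k) (d : ℕ) :
    (d + 1) * Fintype.card V ≤ (k + (d + 1)) * alphaDeg G d := by
  have hk : k < ∑ _i : Fin (k / (d + 1) + 1), (d + 1) := by
    rw [Finset.sum_const, Finset.card_univ, Fintype.card_fin, smul_eq_mul]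
    exact Nat.lt_mul_of_div_lt (Nat.lt_succ_self _) d.succ_pos
  have hcard := hG.card_le_sum_alphaDeg hk
  rw [Finset.sum_const, Finset.card_univ, Fintype.card_fin, smul_eq_mul] at hcard
  calc (d + 1) * Fintype.card V
      ≤ (d + 1) * ((k / (d + 1) + 1) * alphaDeg G d) := Nat.mul_le_mul_left _ hcard
    _ = (k / (d + 1) * (d + 1) + (d + 1)) * alphaDeg G d := by ring
    _ ≤ (k + (d + 1)) * alphaDeg G d := by gcongr; exact Nat.div_mul_le_self k (d + 1)

theorem Degen.div_le_alphaDeg (hG : Degen G k) (d : ℕ) :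
    ((d : ℝ) + 1) * Fintype.card V / ((k : ℝ) + (d + 1)) ≤ alphaDeg G d := by
  rw [div_le_iff₀' (by positivity)]
  exact_mod_cast hG.mul_card_le_mul_alphaDeg d

end AlphaDeg

section AlphaRatio

theorem degen_top_fin_succ (k : ℕ) : Degen (⊤ : SimpleGraph (Fin (k + 1))) k :=
  degen_top_iff.2 (Fintype.card_fin _).le

theorem not_degen_top_fin_succ {k : ℕ} (hk : 0 < k) :
    ¬ Degen (⊤ : SimpleGraph (Fin (k + 1))) (k - 1) := by
  rw [degen_top_iff, Fintype.card_fin]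
  omega

theorem alphaRatio_le_div {k n : ℕ} {G : SimpleGraph (Fin n)} (hG : Degen G k)
    (hG' : ¬ Degen G (k - 1)) (d : ℕ) : alphaRatio d k ≤ alphaDeg G d / n := by
  refine csInf_le ⟨0, ?_⟩ ⟨n, G, hG, hG', rfl⟩
  rintro _ ⟨m, H, -, -, rfl⟩
  positivity

theorem le_alphaRatio (d : ℕ) {k : ℕ} (hk : 0 < k) :
    ((d : ℝ) + 1) / ((k : ℝ) + (d + 1)) ≤ alphaRatio d k := by
  refine le_csInf ⟨_, k + 1, ⊤, degen_top_fin_succ k, not_degen_top_fin_succ hk, rfl⟩ ?_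
  rintro _ ⟨n, G, hG, hG', rfl⟩
  have hn : n ≠ 0 := by
    rintro rfl
    exact hG' (degen_of_isEmpty G (k - 1))
  rw [le_div_iff₀ (by positivity), div_mul_eq_mul_div]
  simpa only [Fintype.card_fin] using hG.div_le_alphaDeg d

theorem alphaRatio_le (d : ℕ) {k : ℕ} (hk : 0 < k) :
    alphaRatio d k ≤ ((d : ℝ) + 1) / ((k : ℝ) + 1) :=
  calc alphaRatio d k
      ≤ alphaDeg (⊤ : SimpleGraph (Fin (k + 1))) d / ((k + 1 : ℕ) : ℝ) :=
        alphaRatio_le_div (degen_top_fin_succ k) (not_degen_top_fin_succ hk) d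
    _ ≤ ((d + 1 : ℕ) : ℝ) / ((k + 1 : ℕ) : ℝ) := by gcongr; exact alphaDeg_top_le _ d
    _ = ((d : ℝ) + 1) / ((k : ℝ) + 1) := by rw [Nat.cast_succ, Nat.cast_succ]

end AlphaRatio

theorem stmt_10_general (d k : ℕ) (hk : 0 < k) :
    (∀ {V : Type*} [Fintype V] (G : SimpleGraph V), Degen G k →
      ((d : ℝ) + 1) * (Fintype.card V : ℝ) / ((k : ℝ) + (d + 1)) ≤ (alphaDeg G d : ℝ)) ∧
    ((d : ℝ) + 1) / ((k : ℝ) + (d + 1)) ≤ alphaRatio d k ∧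
    alphaRatio d k ≤ ((d : ℝ) + 1) / ((k : ℝ) + 1) :=
  ⟨fun _ hG ↦ hG.div_le_alphaDeg d, le_alphaRatio d hk, alphaRatio_le d hk⟩

theorem stmt_10 (k : ℕ) (hk : 2 ≤ k) :
    (∀ {V : Type*} [Fintype V] (G : SimpleGraph V), Degen G k →
      2 * (Fintype.card V : ℝ) / ((k : ℝ) + 2) ≤ (alphaDeg G 1 : ℝ)) ∧
    2 / ((k : ℝ) + 2) ≤ alphaRatio 1 k ∧ alphaRatio 1 k ≤ 2 / ((k : ℝ) + 1) := by
  simpa only [Nat.cast_one, one_add_one_eq_two] using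
    stmt_10_general 1 k (zero_lt_two.trans_le hk)
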